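/- Suppose φ : ℝ → ℝ is slope-restricted on [0, β], Λ ∈ ℝ^{q×q} is diagonal positive definite, P ∈ ℝ^{n×n} is positive definite, and LMI (11) holds. Then there exists α ∈ (0, 1) such that for any two state trajectories x^a, x^b of the Robust RNN driven by the same input sequence u (from possibly different initial conditions), the storage function V_t = (x^a_t − x^b_t)ᵀ Eᵀ P⁻¹ E (x^a_t − x^b_t) satisfies V_{t+1} ≤ α V_t for all t ∈ ℕ; i.e., the dynamics are contracting, with V_t ≤ α^t V₀. -/

import Mathlib

open Matrix

/-- A function `φ : ℝ → ℝ` is slope-restricted on `[0, β]`: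
`0 ≤ (φ y − φ x)/(y − x) ≤ β` for all `x ≠ y`. -/
def SlopeRestricted (β : ℝ) (φ : ℝ → ℝ) : Prop :=
  ∀ x y : ℝ, x ≠ y → 0 ≤ (φ y - φ x) / (y - x) ∧ (φ y - φ x) / (y - x) ≤ β

/-- The matrix of LMI (11):
`[[E + Eᵀ − P, −β C₂ᵀ], [−β C₂, 2Λ]] − [Fᵀ; B₁ᵀ] P⁻¹ [Fᵀ; B₁ᵀ]ᵀ`. -/
noncomputable def LMI11 {n q : ℕ} (β : ℝ)
    (E F : Matrix (Fin n) (Fin n) ℝ) (B₁ : Matrix (Fin n) (Fin q) ℝ)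
    (Λ : Matrix (Fin q) (Fin q) ℝ) (C₂ : Matrix (Fin q) (Fin n) ℝ)
    (P : Matrix (Fin n) (Fin n) ℝ) :
    Matrix (Fin n ⊕ Fin q) (Fin n ⊕ Fin q) ℝ :=
  Matrix.fromBlocks (E + Eᵀ - P) ((-β) • C₂ᵀ) ((-β) • C₂) ((2 : ℝ) • Λ)
    - (Matrix.fromRows Fᵀ B₁ᵀ) * P⁻¹ * (Matrix.fromRows Fᵀ B₁ᵀ)ᵀ

/-- `(x, y)` is a state/output trajectory of the Robust RNN
`x_{t+1} = E⁻¹(F x_t + B₁ Φ(v_t) + B₂ u_t)`, `y_t = C₁ x_t + D₁₁ Φ(v_t) + D₁₂ u_t`,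
`v_t = Λ⁻¹(C₂ x_t + b + D₂₂ u_t)`, driven by the input sequence `u`, where `Φ` applies
`φ` elementwise. -/
def IsRobustRNNTraj {n m p q : ℕ} (φ : ℝ → ℝ)
    (E F : Matrix (Fin n) (Fin n) ℝ) (B₁ : Matrix (Fin n) (Fin q) ℝ)
    (B₂ : Matrix (Fin n) (Fin m) ℝ) (C₁ : Matrix (Fin p) (Fin n) ℝ)
    (D₁₁ : Matrix (Fin p) (Fin q) ℝ) (D₁₂ : Matrix (Fin p) (Fin m) ℝ)
    (Λ : Matrix (Fin q) (Fin q) ℝ) (C₂ : Matrix (Fin q) (Fin n) ℝ)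
    (b : Fin q → ℝ) (D₂₂ : Matrix (Fin q) (Fin m) ℝ)
    (u : ℕ → Fin m → ℝ) (x : ℕ → Fin n → ℝ) (y : ℕ → Fin p → ℝ) : Prop :=
  ∀ t : ℕ,
    x (t + 1) = E⁻¹ *ᵥ (F *ᵥ x t
        + B₁ *ᵥ (fun i => φ ((Λ⁻¹ *ᵥ (C₂ *ᵥ x t + b + D₂₂ *ᵥ u t)) i))
        + B₂ *ᵥ u t) ∧
    y t = C₁ *ᵥ x t
        + D₁₁ *ᵥ (fun i => φ ((Λ⁻¹ *ᵥ (C₂ *ᵥ x t + b + D₂₂ *ᵥ u t)) i))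
        + D₁₂ *ᵥ u t

/-!
Substituting the increments `d` of the state and `w` of the neuron outputs into the quadratic form
of LMI (11) gives `dᵀ(E + Eᵀ − P)d − ‖F d + B₁ w‖²` in the norm of `P⁻¹`, plus `2(wᵀΛw − β wᵀC₂d)`.
The last term is nonpositive because slope restriction makes `φ` cocoercive, and
`E + Eᵀ − P ≼ Eᵀ P⁻¹ E` by completing the square. Hence the storage drops in each step by at
least the value of the form, and strict positivity of the LMI turns this into a fixed fraction of
the storage by compactness of the unit sphere.
-/

section QuadraticForms

variable {ι κ : Type*} [Fintype ι] [Fintype κ]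

theorem dotProduct_transpose_mul_mul_mulVec {R : Type*} [CommSemiring R] (A : Matrix κ ι R)
    (B : Matrix κ κ R) (x : ι → R) :
    x ⬝ᵥ ((Aᵀ * B * A) *ᵥ x) = (A *ᵥ x) ⬝ᵥ (B *ᵥ (A *ᵥ x)) := by
  rw [Matrix.mul_assoc, ← mulVec_mulVec, dotProduct_transpose_mulVec, ← mulVec_mulVec,
    dotProduct_comm]

theorem isUnit_of_posDef_add_conjTranspose {K : Type*} [Field K] [PartialOrder K] [StarRing K]
    [DecidableEq ι] {A : Matrix ι ι K} (hA : (A + Aᴴ).PosDef) : IsUnit A := by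
  rw [isUnit_iff_isUnit_det, isUnit_iff_ne_zero]
  intro hdet
  obtain ⟨x, hx, hAx⟩ := exists_mulVec_eq_zero_iff.mpr hdet
  have hAx' : star x ᵥ* Aᴴ = 0 := by rw [← star_mulVec, hAx, star_zero]
  have hpos := hA.dotProduct_mulVec_pos hx
  rw [add_mulVec, dotProduct_add, hAx, dotProduct_mulVec _ Aᴴ, hAx', dotProduct_zero,
    zero_dotProduct, add_zero] at hpos
  exact hpos.false

theorem posSemidef_conjTranspose_mul_inv_mul_sub {K : Type*} [Field K] [PartialOrder K]
    [StarRing K] [DecidableEq ι] {P : Matrix ι ι K} (hP : P.PosDef) (E : Matrix ι ι K) :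
    (Eᴴ * P⁻¹ * E - (E + Eᴴ - P)).PosSemidef := by
  have hdet : IsUnit P.det := (isUnit_iff_isUnit_det P).mp hP.isUnit
  have hsq : Eᴴ * P⁻¹ * E - (E + Eᴴ - P) = (E - P)ᴴ * P⁻¹ * (E - P) := by
    rw [conjTranspose_sub, hP.isHermitian.eq, Matrix.sub_mul, mul_nonsing_inv P hdet,
      Matrix.mul_sub, Matrix.sub_mul, Matrix.sub_mul, nonsing_inv_mul_cancel_right P _ hdet,
      Matrix.one_mul, Matrix.one_mul]
    abel
  rw [hsq]
  exact hP.inv.posSemidef.conjTranspose_mul_mul_same (E - P)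

theorem exists_forall_dotProduct_mulVec_le_mul {M : Matrix ι ι ℝ} (hM : M.PosDef)
    (N : Matrix ι ι ℝ) : ∃ K : ℝ, ∀ z : ι → ℝ, z ⬝ᵥ (N *ᵥ z) ≤ K * (z ⬝ᵥ (M *ᵥ z)) := by
  have hpos {z : ι → ℝ} (hz : z ≠ 0) : 0 < z ⬝ᵥ (M *ᵥ z) := hM.dotProduct_mulVec_pos hz
  have hcont : ContinuousOn (fun z : ι → ℝ => z ⬝ᵥ (N *ᵥ z) / z ⬝ᵥ (M *ᵥ z))
      (Metric.sphere 0 1) := by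
    refine ContinuousOn.div (by fun_prop) (by fun_prop) fun z hz => (hpos ?_).ne'
    exact ne_zero_of_mem_unit_sphere ⟨z, hz⟩
  obtain ⟨K, hK⟩ := (isCompact_sphere (0 : ι → ℝ) 1).bddAbove_image hcont
  refine ⟨K, fun z => ?_⟩
  obtain rfl | hz := eq_or_ne z 0
  · simp
  have hscale : ‖z‖⁻¹ ≠ 0 := inv_ne_zero (norm_ne_zero_iff.mpr hz)
  have hunit : ‖z‖⁻¹ • z ∈ Metric.sphere (0 : ι → ℝ) 1 := by
    simp [norm_smul, norm_ne_zero_iff.mpr hz]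
  have hratio := hK (Set.mem_image_of_mem _ hunit)
  simp only [mulVec_smul, dotProduct_smul, smul_dotProduct, smul_eq_mul,
    mul_div_mul_left _ _ hscale] at hratio
  exact (div_le_iff₀ (hpos hz)).mp hratio

theorem exists_forall_mul_dotProduct_mulVec_le {M : Matrix ι ι ℝ} (hM : M.PosDef)
    (N : Matrix ι ι ℝ) :
    ∃ ε : ℝ, 0 < ε ∧ ε < 1 ∧ ∀ z : ι → ℝ, ε * (z ⬝ᵥ (N *ᵥ z)) ≤ z ⬝ᵥ (M *ᵥ z) := by
  obtain ⟨K, hK⟩ := exists_forall_dotProduct_mulVec_le_mul hM N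
  have hlarge : 1 < max K 2 := lt_max_of_lt_right one_lt_two
  have hlarge_pos : 0 < max K 2 := one_pos.trans hlarge
  refine ⟨(max K 2)⁻¹, inv_pos.mpr hlarge_pos, inv_lt_one_of_one_lt₀ hlarge, fun z => ?_⟩
  have hnonneg : 0 ≤ z ⬝ᵥ (M *ᵥ z) := hM.posSemidef.dotProduct_mulVec_nonneg z
  rw [inv_mul_le_iff₀ hlarge_pos]
  exact (hK z).trans (mul_le_mul_of_nonneg_right (le_max_left K 2) hnonneg)

end QuadraticForms

namespace SlopeRestricted

variable {β : ℝ} {φ : ℝ → ℝ}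

theorem sq_sub_le (hφ : SlopeRestricted β φ) (x y : ℝ) :
    (φ y - φ x) ^ 2 ≤ β * ((φ y - φ x) * (y - x)) := by
  obtain rfl | hxy := eq_or_ne x y
  · simp
  obtain ⟨hslope_nonneg, hslope_le⟩ := hφ x y hxy
  have hslope : φ y - φ x = (φ y - φ x) / (y - x) * (y - x) :=
    (div_mul_cancel₀ _ (sub_ne_zero.mpr hxy.symm)).symm
  set s := (φ y - φ x) / (y - x)
  calc (φ y - φ x) ^ 2 = s * s * (y - x) ^ 2 := by rw [hslope]; ring
    _ ≤ β * s * (y - x) ^ 2 := by gcongr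
    _ = β * ((φ y - φ x) * (y - x)) := by rw [hslope]; ring

theorem dotProduct_mulVec_comp_sub_le {ι : Type*} [Fintype ι] (hφ : SlopeRestricted β φ)
    {Λ : Matrix ι ι ℝ} (hΛdiag : Λ.IsDiag) (hΛ : Λ.PosSemidef) (v v' : ι → ℝ) :
    (φ ∘ v - φ ∘ v') ⬝ᵥ (Λ *ᵥ (φ ∘ v - φ ∘ v')) ≤
      β * ((φ ∘ v - φ ∘ v') ⬝ᵥ (Λ *ᵥ (v - v'))) := by
  classical
  rw [← hΛdiag.diagonal_diag]
  simp only [dotProduct, mulVec_diagonal, Finset.mul_sum, Pi.sub_apply, Function.comp_apply,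
    diag_apply]
  refine Finset.sum_le_sum fun i _ => ?_
  linear_combination mul_le_mul_of_nonneg_left (hφ.sq_sub_le (v' i) (v i)) (hΛ.diag_nonneg (i := i))

end SlopeRestricted

/-- The storage function `V(d) = dᵀ Eᵀ P⁻¹ E d` of a state increment `d = xᵃ − xᵇ`. -/
noncomputable def incrementalStorage {ι : Type*} [Fintype ι] [DecidableEq ι]
    (E P : Matrix ι ι ℝ) (d : ι → ℝ) : ℝ :=
  d ⬝ᵥ ((Eᵀ * P⁻¹ * E) *ᵥ d)

theorem dotProduct_add_transpose_sub_mulVec_le_incrementalStorage {ι : Type*} [Fintype ι]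
    [DecidableEq ι] {P : Matrix ι ι ℝ} (hP : P.PosDef) (E : Matrix ι ι ℝ) (d : ι → ℝ) :
    d ⬝ᵥ ((E + Eᵀ - P) *ᵥ d) ≤ incrementalStorage E P d := by
  have hgap := (posSemidef_conjTranspose_mul_inv_mul_sub hP E).dotProduct_mulVec_nonneg d
  rwa [star_trivial, conjTranspose_eq_transpose_of_trivial, sub_mulVec, dotProduct_sub,
    sub_nonneg] at hgap

section LMI

variable {n q : ℕ} {β : ℝ} {E F P : Matrix (Fin n) (Fin n) ℝ} {B₁ : Matrix (Fin n) (Fin q) ℝ}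
  {Λ : Matrix (Fin q) (Fin q) ℝ} {C₂ : Matrix (Fin q) (Fin n) ℝ}

theorem isUnit_of_posDef_LMI11 (hP : P.PosDef) (hLMI : (LMI11 β E F B₁ Λ C₂ P).PosDef) :
    IsUnit E := by
  have hblocks : (fromBlocks (E + Eᵀ - P) ((-β) • C₂ᵀ) ((-β) • C₂) ((2 : ℝ) • Λ)).PosDef := by
    simpa only [LMI11, conjTranspose_eq_transpose_of_trivial, sub_add_cancel] using
      hLMI.add_posSemidef (hP.inv.posSemidef.mul_mul_conjTranspose_same (fromRows Fᵀ B₁ᵀ))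
  have hcorner : (E + Eᵀ - P).PosDef := hblocks.submatrix Sum.inl_injective
  apply isUnit_of_posDef_add_conjTranspose
  simpa only [conjTranspose_eq_transpose_of_trivial, sub_add_cancel] using hcorner.add hP

theorem dotProduct_LMI11_mulVec_sumElim (d : Fin n → ℝ) (w : Fin q → ℝ) :
    Sum.elim d w ⬝ᵥ (LMI11 β E F B₁ Λ C₂ P *ᵥ Sum.elim d w) =
      d ⬝ᵥ ((E + Eᵀ - P) *ᵥ d) + 2 * (w ⬝ᵥ (Λ *ᵥ w) - β * (w ⬝ᵥ (C₂ *ᵥ d)))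
        - (F *ᵥ d + B₁ *ᵥ w) ⬝ᵥ (P⁻¹ *ᵥ (F *ᵥ d + B₁ *ᵥ w)) := by
  rw [LMI11, ← transpose_fromCols, transpose_transpose, sub_mulVec, dotProduct_sub,
    dotProduct_transpose_mul_mul_mulVec, fromCols_mulVec_sumElim, fromBlocks_mulVec]
  simp only [Sum.elim_comp_inl, Sum.elim_comp_inr, sumElim_dotProduct_sumElim, dotProduct_add,
    smul_mulVec, dotProduct_smul, smul_eq_mul, dotProduct_transpose_mulVec]
  ring

theorem incrementalStorage_add_dotProduct_LMI11_le (hP : P.PosDef) {d d' : Fin n → ℝ}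
    {w : Fin q → ℝ} (hd' : E *ᵥ d' = F *ᵥ d + B₁ *ᵥ w)
    (hw : w ⬝ᵥ (Λ *ᵥ w) ≤ β * (w ⬝ᵥ (C₂ *ᵥ d))) :
    incrementalStorage E P d' + Sum.elim d w ⬝ᵥ (LMI11 β E F B₁ Λ C₂ P *ᵥ Sum.elim d w) ≤
      incrementalStorage E P d := by
  have hnext : incrementalStorage E P d' =
      (F *ᵥ d + B₁ *ᵥ w) ⬝ᵥ (P⁻¹ *ᵥ (F *ᵥ d + B₁ *ᵥ w)) := by
    rw [incrementalStorage, dotProduct_transpose_mul_mul_mulVec, hd']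
  have hsquare := dotProduct_add_transpose_sub_mulVec_le_incrementalStorage hP E d
  rw [dotProduct_LMI11_mulVec_sumElim, hnext]
  linarith

theorem exists_forall_mul_incrementalStorage_le (hLMI : (LMI11 β E F B₁ Λ C₂ P).PosDef) :
    ∃ ε : ℝ, 0 < ε ∧ ε < 1 ∧ ∀ (d : Fin n → ℝ) (w : Fin q → ℝ),
      ε * incrementalStorage E P d ≤
        Sum.elim d w ⬝ᵥ (LMI11 β E F B₁ Λ C₂ P *ᵥ Sum.elim d w) := by
  obtain ⟨ε, hε_pos, hε_lt, hε⟩ :=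
    exists_forall_mul_dotProduct_mulVec_le hLMI (fromBlocks (Eᵀ * P⁻¹ * E) 0 0 0)
  refine ⟨ε, hε_pos, hε_lt, fun d w => ?_⟩
  simpa only [incrementalStorage, fromBlocks_mulVec, Sum.elim_comp_inl, Sum.elim_comp_inr,
    zero_mulVec, add_zero, sumElim_dotProduct_sumElim, dotProduct_zero] using hε (Sum.elim d w)

end LMI

/-- The neuron input `v = Λ⁻¹(C₂ x + b + D₂₂ u)` at state `x` and input `u`. -/
noncomputable def preactivation {ι κ μ : Type*} [Fintype ι] [Fintype κ] [DecidableEq κ] [Fintype μ]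
    (Λ : Matrix κ κ ℝ) (C₂ : Matrix κ ι ℝ) (b : κ → ℝ) (D₂₂ : Matrix κ μ ℝ) (x : ι → ℝ)
    (u : μ → ℝ) : κ → ℝ :=
  Λ⁻¹ *ᵥ (C₂ *ᵥ x + b + D₂₂ *ᵥ u)

theorem mulVec_preactivation_sub {ι κ μ : Type*} [Fintype ι] [Fintype κ] [DecidableEq κ]
    [Fintype μ] {Λ : Matrix κ κ ℝ} (hΛ : IsUnit Λ) (C₂ : Matrix κ ι ℝ) (b : κ → ℝ)
    (D₂₂ : Matrix κ μ ℝ) (x x' : ι → ℝ) (u : μ → ℝ) :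
    Λ *ᵥ (preactivation Λ C₂ b D₂₂ x u - preactivation Λ C₂ b D₂₂ x' u) = C₂ *ᵥ (x - x') := by
  rw [preactivation, preactivation, ← mulVec_sub, mulVec_mulVec,
    mul_nonsing_inv Λ ((isUnit_iff_isUnit_det Λ).mp hΛ), one_mulVec, add_sub_add_right_eq_sub,
    add_sub_add_right_eq_sub, mulVec_sub]

namespace IsRobustRNNTraj

variable {n m p q : ℕ} {β : ℝ} {φ : ℝ → ℝ} {E F P : Matrix (Fin n) (Fin n) ℝ}
  {B₁ : Matrix (Fin n) (Fin q) ℝ} {B₂ : Matrix (Fin n) (Fin m) ℝ} {C₁ : Matrix (Fin p) (Fin n) ℝ}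
  {D₁₁ : Matrix (Fin p) (Fin q) ℝ} {D₁₂ : Matrix (Fin p) (Fin m) ℝ}
  {Λ : Matrix (Fin q) (Fin q) ℝ} {C₂ : Matrix (Fin q) (Fin n) ℝ} {b : Fin q → ℝ}
  {D₂₂ : Matrix (Fin q) (Fin m) ℝ} {u : ℕ → Fin m → ℝ} {xa xb : ℕ → Fin n → ℝ}
  {ya yb : ℕ → Fin p → ℝ}

theorem mulVec_succ_sub (hE : IsUnit E)
    (ha : IsRobustRNNTraj φ E F B₁ B₂ C₁ D₁₁ D₁₂ Λ C₂ b D₂₂ u xa ya)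
    (hb : IsRobustRNNTraj φ E F B₁ B₂ C₁ D₁₁ D₁₂ Λ C₂ b D₂₂ u xb yb) (t : ℕ) :
    E *ᵥ (xa (t + 1) - xb (t + 1)) = F *ᵥ (xa t - xb t) +
      B₁ *ᵥ (φ ∘ preactivation Λ C₂ b D₂₂ (xa t) (u t) -
        φ ∘ preactivation Λ C₂ b D₂₂ (xb t) (u t)) := by
  rw [(ha t).1, (hb t).1, ← mulVec_sub, mulVec_mulVec,
    mul_nonsing_inv E ((isUnit_iff_isUnit_det E).mp hE), one_mulVec, add_sub_add_right_eq_sub,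
    add_sub_add_comm, ← mulVec_sub, ← mulVec_sub]
  rfl

theorem incrementalStorage_succ_add_le (hφ : SlopeRestricted β φ) (hΛdiag : Λ.IsDiag)
    (hΛ : Λ.PosDef) (hP : P.PosDef) (hE : IsUnit E)
    (ha : IsRobustRNNTraj φ E F B₁ B₂ C₁ D₁₁ D₁₂ Λ C₂ b D₂₂ u xa ya)
    (hb : IsRobustRNNTraj φ E F B₁ B₂ C₁ D₁₁ D₁₂ Λ C₂ b D₂₂ u xb yb) (t : ℕ) :
    ∃ w : Fin q → ℝ, incrementalStorage E P (xa (t + 1) - xb (t + 1)) +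
      Sum.elim (xa t - xb t) w ⬝ᵥ (LMI11 β E F B₁ Λ C₂ P *ᵥ Sum.elim (xa t - xb t) w) ≤
        incrementalStorage E P (xa t - xb t) := by
  refine ⟨_, incrementalStorage_add_dotProduct_LMI11_le hP (ha.mulVec_succ_sub hE hb t) ?_⟩
  rw [← mulVec_preactivation_sub hΛ.isUnit C₂ b D₂₂ (xa t) (xb t) (u t)]
  exact hφ.dotProduct_mulVec_comp_sub_le hΛdiag hΛ.posSemidef _ _

end IsRobustRNNTraj

/-- Remark 1: LMI (11) implies the Robust RNN dynamics are contracting: there is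
`α ∈ (0,1)` with `V_{t+1} ≤ α V_t` for the incremental storage function
`V_t = (xᵃ_t − xᵇ_t)ᵀ Eᵀ P⁻¹ E (xᵃ_t − xᵇ_t)`, for any two trajectories driven by
the same input. -/
theorem stmt_10 {n m p q : ℕ} (β : ℝ) (hβ : 0 < β)
    (φ : ℝ → ℝ) (hφ : SlopeRestricted β φ)
    (E F : Matrix (Fin n) (Fin n) ℝ) (B₁ : Matrix (Fin n) (Fin q) ℝ)
    (B₂ : Matrix (Fin n) (Fin m) ℝ) (C₁ : Matrix (Fin p) (Fin n) ℝ)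
    (D₁₁ : Matrix (Fin p) (Fin q) ℝ) (D₁₂ : Matrix (Fin p) (Fin m) ℝ)
    (Λ : Matrix (Fin q) (Fin q) ℝ) (C₂ : Matrix (Fin q) (Fin n) ℝ)
    (b : Fin q → ℝ) (D₂₂ : Matrix (Fin q) (Fin m) ℝ)
    (P : Matrix (Fin n) (Fin n) ℝ)
    (hΛdiag : Λ.IsDiag) (hΛpos : Λ.PosDef) (hP : P.PosDef)
    (hLMI : (LMI11 β E F B₁ Λ C₂ P).PosDef) :
    ∃ α : ℝ, 0 < α ∧ α < 1 ∧
      ∀ (u : ℕ → Fin m → ℝ) (xa xb : ℕ → Fin n → ℝ) (ya yb : ℕ → Fin p → ℝ),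
        IsRobustRNNTraj φ E F B₁ B₂ C₁ D₁₁ D₁₂ Λ C₂ b D₂₂ u xa ya →
        IsRobustRNNTraj φ E F B₁ B₂ C₁ D₁₁ D₁₂ Λ C₂ b D₂₂ u xb yb →
        (∀ t : ℕ,
          (xa (t + 1) - xb (t + 1)) ⬝ᵥ ((Eᵀ * P⁻¹ * E) *ᵥ (xa (t + 1) - xb (t + 1)))
            ≤ α * ((xa t - xb t) ⬝ᵥ ((Eᵀ * P⁻¹ * E) *ᵥ (xa t - xb t)))) ∧
        (∀ t : ℕ,
          (xa t - xb t) ⬝ᵥ ((Eᵀ * P⁻¹ * E) *ᵥ (xa t - xb t))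
            ≤ α ^ t * ((xa 0 - xb 0) ⬝ᵥ ((Eᵀ * P⁻¹ * E) *ᵥ (xa 0 - xb 0)))) := by
  have hE : IsUnit E := isUnit_of_posDef_LMI11 hP hLMI
  obtain ⟨ε, hε_pos, hε_lt, hε⟩ := exists_forall_mul_incrementalStorage_le hLMI
  refine ⟨1 - ε, sub_pos.mpr hε_lt, sub_lt_self 1 hε_pos, fun u xa xb ya yb ha hb => ?_⟩
  have hstep (t : ℕ) : incrementalStorage E P (xa (t + 1) - xb (t + 1)) ≤
      (1 - ε) * incrementalStorage E P (xa t - xb t) := by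
    obtain ⟨w, hw⟩ := ha.incrementalStorage_succ_add_le hφ hΛdiag hΛpos hP hE hb t
    linarith [hε (xa t - xb t) w]
  exact ⟨hstep, fun t => le_geom (u := fun k => incrementalStorage E P (xa k - xb k))
    (sub_pos.mpr hε_lt).le t fun k _ => hstep k⟩
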